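/- Let d ≥ 6 and α, β ∈ ℝ, and let T be the d×d symmetric Toeplitz matrix with T_{ii} = 1, T_{ij} = α when |i − j| = 1, T_{ij} = β when |i − j| = 2, and T_{ij} = 0 when |i − j| ≥ 3. Then (1/d)·T ∈ ℬ_d (i.e. T is a tail dependence matrix) if and only if α ≥ 0, β ≥ 0, α + 4β ≤ 2, and 2α − β ≤ 1. -/

import Mathlib

/-- The set of `d × d` Bernoulli compatible matrices: the convex hull of the
outer products `v vᵀ` of 0-1 vectors `v ∈ {0,1}^d`. -/
def BernoulliSet (d : ℕ) : Set (Matrix (Fin d) (Fin d) ℝ) :=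
  convexHull ℝ {M | ∃ v : Fin d → ℝ, (∀ i, v i = 0 ∨ v i = 1) ∧
    M = Matrix.of (fun i j => v i * v j)}

lemma bern_convex (d : ℕ) : Convex ℝ (BernoulliSet d) := convex_convexHull ℝ _

lemma bern_gen (d : ℕ) (v : Fin d → ℝ) (hv : ∀ i, v i = 0 ∨ v i = 1) :
    Matrix.of (fun i j => v i * v j) ∈ BernoulliSet d :=
  subset_convexHull ℝ _ ⟨v, hv, rfl⟩

lemma bern_zero (d : ℕ) : (0 : Matrix (Fin d) (Fin d) ℝ) ∈ BernoulliSet d := by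
  have := bern_gen d (fun _ => 0) (fun _ => Or.inl rfl)
  convert this using 1
  ext i j
  simp

def TC (d : ℕ) (M : Matrix (Fin d) (Fin d) ℝ) : Prop :=
  0 ≤ M.trace ∧ ∃ z ∈ BernoulliSet d, M = M.trace • z

lemma TC_zero (d : ℕ) : TC d 0 := ⟨by simp, 0, bern_zero d, by simp⟩

lemma TC_add {d : ℕ} {M N : Matrix (Fin d) (Fin d) ℝ} (hM : TC d M) (hN : TC d N) :
    TC d (M + N) := by
  obtain ⟨hm, x, hx, hMx⟩ := hM
  obtain ⟨hn, y, hy, hNy⟩ := hN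
  refine ⟨by rw [Matrix.trace_add]; positivity, ?_⟩
  rw [Matrix.trace_add]
  generalize M.trace = a at *
  generalize N.trace = b at *
  rcases eq_or_lt_of_le (add_nonneg hm hn) with h | h
  · have ha : a = 0 := by linarith
    have hb : b = 0 := by linarith
    exact ⟨0, bern_zero d, by rw [hMx, hNy, ha, hb]; simp⟩
  · refine ⟨(a / (a + b)) • x + (b / (a + b)) • y,
      bern_convex d hx hy (by positivity) (by positivity) (by field_simp), ?_⟩
    rw [smul_add, smul_smul, smul_smul, mul_div_cancel₀ _ h.ne', mul_div_cancel₀ _ h.ne',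
      hMx, hNy]

lemma TC_sum {d : ℕ} (n : ℕ) (f : ℕ → Matrix (Fin d) (Fin d) ℝ) (h : ∀ k, TC d (f k)) :
    TC d (∑ k ∈ Finset.range n, f k) := by
  induction n with
  | zero => simpa using TC_zero d
  | succ n ih => rw [Finset.sum_range_succ]; exact TC_add ih (h n)

lemma TC_gen {d : ℕ} (w : ℝ) (hw : 0 ≤ w) (v : Fin d → ℝ) (hv : ∀ i, v i = 0 ∨ v i = 1) :
    TC d (w • Matrix.of (fun i j => v i * v j)) := by
  have htr : (w • Matrix.of (fun i j => v i * v j)).trace = w * ∑ i, v i := by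
    rw [Matrix.trace_smul, smul_eq_mul]
    congr 1
    apply Finset.sum_congr rfl
    intro i _
    rcases hv i with h | h <;> simp [h]
  have h0 : ∀ i, 0 ≤ v i := fun i => by rcases hv i with h | h <;> simp [h]
  unfold TC
  rw [htr]
  refine ⟨mul_nonneg hw (Finset.sum_nonneg fun i _ => h0 i), ?_⟩
  by_cases hz : ∀ i, v i = 0
  · refine ⟨0, bern_zero d, ?_⟩
    ext i j
    simp [hz]
  · push Not at hz
    obtain ⟨i, hi⟩ := hz
    have h1 : v i = 1 := (hv i).resolve_left hi
    have hS : 1 ≤ ∑ i, v i := by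
      rw [← h1]
      exact Finset.single_le_sum (fun j _ => h0 j) (Finset.mem_univ i)
    refine ⟨(∑ i, v i)⁻¹ • Matrix.of (fun i j => v i * v j), ?_, ?_⟩
    · exact (bern_convex d).smul_mem_of_zero_mem (bern_zero d) (bern_gen d v hv)
        ⟨by positivity, inv_le_one_of_one_le₀ hS⟩
    · rw [smul_smul, mul_assoc, mul_inv_cancel₀ (by positivity), mul_one]

def dl (k a : ℕ) : ℝ := if k = a then 1 else 0

lemma dl_sum (n a b : ℕ) (ha : a < n) :
    ∑ k ∈ Finset.range n, dl k a * dl k b = dl a b := by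
  rw [Finset.sum_eq_single a]
  · simp [dl]
  · intro k _ hk
    simp [dl, hk]
  · intro h
    exact absurd (Finset.mem_range.2 ha) h

lemma suff_aux (d : ℕ) (α β t : ℝ) (ht : 0 ≤ t) (h1 : t ≤ β) (h2 : 2 * t ≤ α)
    (h3 : 0 ≤ 1 - 2 * α - 2 * β + 3 * t) (hd : 0 < d)
    (T : Matrix (Fin d) (Fin d) ℝ)
    (hT : ∀ i j, T i j =
      if Nat.dist i.val j.val = 0 then 1
      else if Nat.dist i.val j.val = 1 then α
      else if Nat.dist i.val j.val = 2 then β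
      else 0) : ((1 : ℝ) / d) • T ∈ BernoulliSet d := by
  have key : T = ∑ k ∈ Finset.range (d + 2),
      ((1 - 2 * α - 2 * β + 3 * t) • Matrix.of (fun i j : Fin d => dl k (i+2) * dl k (j+2))
      + (α - 2 * t) • Matrix.of (fun i j : Fin d =>
          (dl k (i+2) + dl k (i+1)) * (dl k (j+2) + dl k (j+1)))
      + (β - t) • Matrix.of (fun i j : Fin d =>
          (dl k (i+2) + dl k i) * (dl k (j+2) + dl k j))
      + t • Matrix.of (fun i j : Fin d =>
          (dl k (i+2) + dl k (i+1) + dl k i) * (dl k (j+2) + dl k (j+1) + dl k j))) := by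
    ext i j
    rw [Matrix.sum_apply]
    simp only [Matrix.add_apply, Matrix.smul_apply, Matrix.of_apply, smul_eq_mul, mul_add, add_mul,
      Finset.sum_add_distrib, ← Finset.mul_sum]
    have hi := i.2
    simp only [dl_sum (d+2) (i.val+2) _ (by omega), dl_sum (d+2) (i.val+1) _ (by omega),
      dl_sum (d+2) (i.val) _ (by omega)]
    rw [hT]
    generalize i.val = a
    generalize j.val = b
    unfold Nat.dist dl
    rcases lt_trichotomy a b with h | h | h
    · obtain ⟨c, rfl⟩ := Nat.exists_eq_add_of_lt h
      rcases c with _ | _ | c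
      · repeat first | rw [if_neg (by omega)] | rw [if_pos (by omega)]
        ring
      · repeat first | rw [if_neg (by omega)] | rw [if_pos (by omega)]
        ring
      · rw [if_neg (by omega), if_neg (by omega), if_neg (by omega)]
        repeat rw [if_neg (by omega)]
        ring
    · subst h
      simp; ring
    · obtain ⟨c, rfl⟩ := Nat.exists_eq_add_of_lt h
      rcases c with _ | _ | c
      · repeat first | rw [if_neg (by omega)] | rw [if_pos (by omega)]
        ring
      · repeat first | rw [if_neg (by omega)] | rw [if_pos (by omega)]
        ring
      · rw [if_neg (by omega), if_neg (by omega), if_neg (by omega)]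
        repeat rw [if_neg (by omega)]
        ring
  have hTC : TC d T := by
    rw [key]
    apply TC_sum
    intro k
    refine TC_add (TC_add (TC_add ?_ ?_) ?_) ?_
    · apply TC_gen _ h3 (fun i : Fin d => dl k (i+2))
      intro i; unfold dl; split_ifs <;> simp
    · apply TC_gen _ (by linarith) (fun i : Fin d => dl k (i+2) + dl k (i+1))
      intro i; unfold dl; split_ifs <;> first | omega | simp
    · apply TC_gen _ (by linarith) (fun i : Fin d => dl k (i+2) + dl k i)
      intro i; unfold dl; split_ifs <;> first | omega | simp
    · apply TC_gen _ ht (fun i : Fin d => dl k (i+2) + dl k (i+1) + dl k i)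
      intro i; unfold dl; split_ifs <;> first | omega | simp
  have htr : T.trace = d := by
    simp [Matrix.trace, hT]
  obtain ⟨_, z, hz, hTz⟩ := hTC
  rw [htr] at hTz
  rw [hTz, smul_smul, one_div, inv_mul_cancel₀ (by positivity), one_smul]
  exact hz

lemma bern_ind {d : ℕ} (L : Matrix (Fin d) (Fin d) ℝ →ₗ[ℝ] ℝ)
    (hL : ∀ v : Fin d → ℝ, (∀ i, v i = 0 ∨ v i = 1) → 0 ≤ L (Matrix.of (fun i j => v i * v j)))
    {M : Matrix (Fin d) (Fin d) ℝ} (hM : M ∈ BernoulliSet d) : 0 ≤ L M := by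
  have : BernoulliSet d ⊆ {M | 0 ≤ L M} := by
    apply convexHull_min
    · rintro _ ⟨v, hv, rfl⟩
      exact hL v hv
    · exact convex_halfSpace_ge L.isLinear 0
  exact this hM

theorem stmt9 (d : ℕ) (hd : 6 ≤ d) (α β : ℝ)
    (T : Matrix (Fin d) (Fin d) ℝ)
    (hT : ∀ i j, T i j =
      if Nat.dist i.val j.val = 0 then 1
      else if Nat.dist i.val j.val = 1 then α
      else if Nat.dist i.val j.val = 2 then β
      else 0) :
    ((1 : ℝ) / d) • T ∈ BernoulliSet d ↔
      (0 ≤ α ∧ 0 ≤ β ∧ α + 4 * β ≤ 2 ∧ 2 * α - β ≤ 1) := by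
  constructor
  · intro hM
    have hdp : (0 : ℝ) < 1 / d := by
      have : (0 : ℝ) < d := by exact_mod_cast (by omega : 0 < d)
      positivity
    have main : ∀ L : Matrix (Fin d) (Fin d) ℝ →ₗ[ℝ] ℝ,
        (∀ v : Fin d → ℝ, (∀ i, v i = 0 ∨ v i = 1) →
          0 ≤ L (Matrix.of (fun i j => v i * v j))) → 0 ≤ L T := by
      intro L hL
      have := bern_ind L hL hM
      rw [map_smul, smul_eq_mul] at this
      exact nonneg_of_mul_nonneg_right this hdp
    let e : Fin 6 → Fin d := fun i => ⟨i.val, by omega⟩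
    let E : Fin 6 → Fin 6 → Matrix (Fin d) (Fin d) ℝ →ₗ[ℝ] ℝ :=
      fun i j => Matrix.entryLinearMap ℝ ℝ (e i) (e j)
    have hE : ∀ i j M, E i j M = M (e i) (e j) := fun i j M => rfl
    have A1 := main (E 0 1) (by
      intro v hv
      simp only [hE, Matrix.of_apply]
      rcases hv (e 0) with h0 | h0 <;> rcases hv (e 1) with h1 | h1 <;> simp [h0, h1])
    have A2 := main (E 0 2) (by
      intro v hv
      simp only [hE, Matrix.of_apply]
      rcases hv (e 0) with h0 | h0 <;> rcases hv (e 2) with h1 | h1 <;> simp [h0, h1])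
    have A3 := main (E 2 2 - E 1 2 - E 2 3 + E 1 3) (by
      intro v hv
      simp only [LinearMap.add_apply, LinearMap.sub_apply, hE, Matrix.of_apply]
      rcases hv (e 1) with h1 | h1 <;> rcases hv (e 2) with h2 | h2 <;>
      rcases hv (e 3) with h3 | h3 <;> rw [h1, h2, h3] <;> norm_num)
    have A4 := main (E 2 2 + E 3 3 - E 2 3 - E 0 2 - E 2 4 - E 1 3 - E 3 5
        + E 0 3 + E 0 4 + E 0 5 + E 1 4 + E 1 5 + E 2 5) (by
      intro v hv
      simp only [LinearMap.add_apply, LinearMap.sub_apply, hE, Matrix.of_apply]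
      rcases hv (e 0) with h0 | h0 <;> rcases hv (e 1) with h1 | h1 <;>
      rcases hv (e 2) with h2 | h2 <;> rcases hv (e 3) with h3 | h3 <;>
      rcases hv (e 4) with h4 | h4 <;> rcases hv (e 5) with h5 | h5 <;>
      rw [h0, h1, h2, h3, h4, h5] <;> norm_num)
    simp only [LinearMap.add_apply, LinearMap.sub_apply, hE, hT] at A1 A2 A3 A4
    simp [e, Nat.dist] at A1 A2 A3 A4
    refine ⟨A1, A2, ?_, ?_⟩ <;> linarith
  · rintro ⟨h1, h2, h3, h4⟩
    rcases le_total β (α / 2) with h | h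
    · exact suff_aux d α β β h2 le_rfl (by linarith) (by linarith) (by omega) T hT
    · exact suff_aux d α β (α / 2) (by linarith) h (by linarith) (by linarith) (by omega) T hT
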